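/- Let Γ be a distance-regular graph of diameter D ≥ 2 and valency k on n vertices, let q be a nonzero real number, and let θ ≠ k be an eigenvalue of the adjacency matrix of Γ with standard sequence (u_i)_{i=0}^D. Let F = Σ_{i=0}^D u_i A_i, where A_i is the distance-i matrix of Γ (F is a positive scalar multiple of the primitive idempotent E of θ). Then θ is of classical q-type if and only if the q-distance matrix 𝔻_q of Γ lies in the real linear span of the all-ones matrix J and F. -/

import Mathlib

/-- `G` is a distance-regular graph of diameter `D` with intersection numbers
`p h i j = p^h_{ij}`: for any two vertices `x, y` at distance `h`, the number of
vertices `z` with `d(x,z) = i` and `d(y,z) = j` equals `p h i j`. -/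
structure IsDRG {V : Type*} [Fintype V] (G : SimpleGraph V) (D : ℕ)
    (p : ℕ → ℕ → ℕ → ℕ) : Prop where
  connected : G.Connected
  dist_le : ∀ x y : V, G.dist x y ≤ D
  exists_dist_eq : ∃ x y : V, G.dist x y = D
  inter : ∀ h i j : ℕ, h ≤ D → i ≤ D → j ≤ D → ∀ x y : V, G.dist x y = h →
    {z : V | G.dist x z = i ∧ G.dist y z = j}.ncard = p h i j

/-- `u` is the standard sequence of `θ` for a distance-regular graph with
intersection numbers `p` (so valency `k = b₀ = p 0 1 1`, `cᵢ = p i 1 (i-1)`,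
`aᵢ = p i 1 i`, `bᵢ = p i 1 (i+1)`). -/
def IsStdSeq (D : ℕ) (p : ℕ → ℕ → ℕ → ℕ) (θ : ℝ) (u : ℕ → ℝ) : Prop :=
  u 0 = 1 ∧ u 1 = θ / (p 0 1 1 : ℝ) ∧
    ∀ i : ℕ, 1 ≤ i → i ≤ D - 1 →
      (p i 1 (i - 1) : ℝ) * u (i - 1) + (p i 1 i : ℝ) * u i
          + (p i 1 (i + 1) : ℝ) * u (i + 1) = θ * u i

/-- The sequence `u` (a standard sequence) is of classical `q`-type:
`u i = (1/q) * u (i-1) + c` for `i = 1, …, D`, for some real `c`. -/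
def IsClassicalQType (D : ℕ) (q : ℝ) (u : ℕ → ℝ) : Prop :=
  ∃ c : ℝ, ∀ i : ℕ, 1 ≤ i → i ≤ D → u i = (1 / q) * u (i - 1) + c

/-- `θ` is an eigenvalue of the adjacency matrix of `G`. -/
def IsAdjEigenval {V : Type*} [Fintype V] (G : SimpleGraph V) [DecidableRel G.Adj]
    (θ : ℝ) : Prop :=
  ∃ v : V → ℝ, v ≠ 0 ∧ (G.adjMatrix ℝ).mulVec v = θ • v

/-- The `q`-distance matrix of a graph `G`: the `(x,y)` entry is
`∑_{j=0}^{d(x,y)-1} q^{-j}` (and `0` on the diagonal, since `d(x,x) = 0`). -/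
noncomputable def qDistMatrix {V : Type*} [Fintype V] (G : SimpleGraph V) (q : ℝ) :
    Matrix V V ℝ :=
  Matrix.of fun x y => ∑ j ∈ Finset.range (G.dist x y), (1 / q) ^ j

/-- The distance-`i` matrix of `G`: the `(x,y)` entry is `1` iff `d(x,y) = i`. -/
noncomputable def distMatrix {V : Type*} [Fintype V] (G : SimpleGraph V) (i : ℕ) : Matrix V V ℝ :=
  Matrix.of fun x y => if G.dist x y = i then 1 else 0

/-!
The `(x, y)` entries of `J`, `F` and `𝔻_q` depend only on `d(x, y)`, and every `n ≤ D` occurs in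
`Γ` as a distance. Hence `𝔻_q = a J + b F` says that the geometric sums `Sₙ = ∑_{j < n} q⁻ʲ` satisfy
`Sₙ = a + b uₙ` for `0 ≤ n ≤ D`. Now `S` satisfies the recurrence `Sₙ₊₁ = q⁻¹ Sₙ + 1`. If `u`
satisfies `uₙ₊₁ = q⁻¹ uₙ + c`, then `uₙ = u₀ + (u₁ - u₀) Sₙ`, and `u₁ ≠ u₀` because `θ ≠ k`, so this
can be solved for `Sₙ`. Conversely `b ≠ 0`, since `S₀ ≠ S₁`, so the recurrence of `S` passes to `u`.
-/

open Finset

section Recurrence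

theorem eq_add_mul_geom_sum_of_recurrence {R : Type*} [CommRing R] {r c : R} {u : ℕ → R} {N : ℕ}
    (h : ∀ i < N, u (i + 1) = r * u i + c) {n : ℕ} (hn : n ≤ N) :
    u n = u 0 + (u 1 - u 0) * ∑ j ∈ range n, r ^ j := by
  induction n with
  | zero => simp
  | succ n ih =>
    have h_first : u 1 = r * u 0 + c := h 0 (by lia)
    have h_last : u (n + 1) = r * u n + c := h n hn
    rw [geom_sum_succ]
    linear_combination h_last + r * ih (by lia) - h_first

variable {K : Type*} [Field K] {r : K} {u : ℕ → K} {N : ℕ}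

theorem exists_affine_eq_geom_sum_of_recurrence (hu : u 1 ≠ u 0) {c : K}
    (h : ∀ i < N, u (i + 1) = r * u i + c) :
    ∃ a b : K, ∀ n ≤ N, a + b * u n = ∑ j ∈ range n, r ^ j := by
  have hne : u 1 - u 0 ≠ 0 := sub_ne_zero.mpr hu
  refine ⟨-(u 0 / (u 1 - u 0)), (u 1 - u 0)⁻¹, fun n hn => ?_⟩
  rw [eq_add_mul_geom_sum_of_recurrence h hn]
  field_simp
  ring

theorem exists_recurrence_of_affine_eq_geom_sum {a b : K}
    (h : ∀ n ≤ N, a + b * u n = ∑ j ∈ range n, r ^ j) :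
    ∃ c : K, ∀ i < N, u (i + 1) = r * u i + c := by
  refine ⟨(r * a + 1 - a) / b, fun i hi => ?_⟩
  have hb : b ≠ 0 := by
    rintro rfl
    have h0 : a = 0 := by simpa using h 0 (by lia)
    have h1 : a = 1 := by simpa using h 1 (by lia)
    exact zero_ne_one (h0.symm.trans h1)
  have h_succ : a + b * u (i + 1) = r * (a + b * u i) + 1 := by
    rw [h (i + 1) hi, h i hi.le, geom_sum_succ]
  field_simp
  linear_combination h_succ

theorem exists_recurrence_iff_exists_affine_eq_geom_sum (hu : u 1 ≠ u 0) :
    (∃ c : K, ∀ i < N, u (i + 1) = r * u i + c) ↔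
      ∃ a b : K, ∀ n ≤ N, a + b * u n = ∑ j ∈ range n, r ^ j :=
  ⟨fun ⟨_, h⟩ => exists_affine_eq_geom_sum_of_recurrence hu h,
    fun ⟨_, _, h⟩ => exists_recurrence_of_affine_eq_geom_sum h⟩

end Recurrence

section DistFunMatrix

variable {V : Type*} {G : SimpleGraph V}

theorem exists_dist_eq_of_le_dist {x y : V} {n : ℕ} (hn : n ≤ G.dist x y) :
    ∃ z, G.dist x z = n := by
  obtain rfl | hn0 := eq_or_ne n 0
  · exact ⟨x, G.dist_self⟩
  · obtain ⟨w, hw⟩ := G.exists_walk_of_dist_ne_zero (u := x) (v := y) (by lia)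
    refine ⟨w.getVert n, ?_⟩
    rw [← SimpleGraph.length_eq_dist_of_subwalk hw (w.isSubwalk_take n), w.take_length, hw,
      min_eq_left hn]

/-- The matrix with `(x, y)` entry `f (d(x, y))`. It puts the matrices `J`, `∑ uᵢ Aᵢ` and `𝔻_q` into
a common form, in which they correspond to the functions `1`, `u` and `n ↦ ∑_{j < n} q⁻ʲ`. -/
noncomputable def distFunMatrix {α : Type*} (G : SimpleGraph V) (f : ℕ → α) : Matrix V V α :=
  Matrix.of fun x y => f (G.dist x y)

theorem distFunMatrix_inj [Nonempty V] (hG : G.ediam ≠ ⊤) {α : Type*} {f g : ℕ → α} :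
    distFunMatrix G f = distFunMatrix G g ↔ ∀ n ≤ G.diam, f n = g n := by
  refine ⟨fun h n hn => ?_, fun h => Matrix.ext fun x y => h _ (SimpleGraph.dist_le_diam hG)⟩
  obtain ⟨x, y, hxy⟩ := G.exists_dist_eq_diam
  obtain ⟨z, rfl⟩ := exists_dist_eq_of_le_dist (hn.trans_eq hxy.symm)
  exact congr_fun₂ h x z

theorem distFunMatrix_mem_span_pair [Nonempty V] (hG : G.ediam ≠ ⊤) {R : Type*} [Semiring R]
    {f g : ℕ → R} :
    distFunMatrix G f ∈ Submodule.span R {Matrix.of fun _ _ => (1 : R), distFunMatrix G g} ↔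
      ∃ a b : R, ∀ n ≤ G.diam, a + b * g n = f n := by
  have h_comb (a b : R) : a • Matrix.of (fun _ _ => (1 : R)) + b • distFunMatrix G g =
      distFunMatrix G fun n => a + b * g n := by
    ext x y
    simp [distFunMatrix]
  simp only [Submodule.mem_span_pair, h_comb, distFunMatrix_inj hG]

theorem stmt5_general [Nonempty V] (hG : G.ediam ≠ ⊤) {K : Type*} [Field K] (r : K) {u : ℕ → K}
    (hu : u 1 ≠ u 0) :
    (∃ c : K, ∀ i < G.diam, u (i + 1) = r * u i + c) ↔
      distFunMatrix G (fun n => ∑ j ∈ range n, r ^ j) ∈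
        Submodule.span K {Matrix.of fun _ _ => (1 : K), distFunMatrix G u} := by
  rw [distFunMatrix_mem_span_pair hG, exists_recurrence_iff_exists_affine_eq_geom_sum hu]

theorem sum_smul_distMatrix [Fintype V] {D : ℕ} (hD : ∀ x y, G.dist x y ≤ D) (u : ℕ → ℝ) :
    ∑ i ∈ range (D + 1), u i • distMatrix G i = distFunMatrix G u := by
  ext x y
  simp [Matrix.sum_apply, distMatrix, distFunMatrix, Nat.lt_succ_of_le (hD x y)]

end DistFunMatrix

namespace IsDRG

variable {V : Type*} [Fintype V] {G : SimpleGraph V} {D : ℕ} {p : ℕ → ℕ → ℕ → ℕ}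

theorem ediam_ne_top (h : IsDRG G D p) : G.ediam ≠ ⊤ :=
  have := h.connected.nonempty
  SimpleGraph.connected_iff_ediam_ne_top.mp h.connected

theorem diam_eq (h : IsDRG G D p) : G.diam = D := by
  have := h.connected.nonempty
  obtain ⟨x, y, hxy⟩ := h.exists_dist_eq
  obtain ⟨x', y', hxy'⟩ := G.exists_dist_eq_diam
  exact le_antisymm (hxy' ▸ h.dist_le x' y') (hxy ▸ SimpleGraph.dist_le_diam h.ediam_ne_top)

end IsDRG

theorem IsStdSeq.apply_one_ne_apply_zero {D : ℕ} {p : ℕ → ℕ → ℕ → ℕ} {θ : ℝ} {u : ℕ → ℝ}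
    (hu : IsStdSeq D p θ u) (hθ : θ ≠ p 0 1 1) : u 1 ≠ u 0 := by
  rw [hu.1, hu.2.1]
  exact fun h => hθ (eq_of_div_eq_one h)

theorem isClassicalQType_iff {D : ℕ} {q : ℝ} {u : ℕ → ℝ} :
    IsClassicalQType D q u ↔ ∃ c : ℝ, ∀ i < D, u (i + 1) = 1 / q * u i + c := by
  refine exists_congr fun c => ⟨fun h i hi => h (i + 1) (by lia) hi, fun h i hi hiD => ?_⟩
  obtain ⟨n, rfl⟩ := Nat.exists_eq_add_of_le' hi
  exact h n hiD

/-- Let `θ ≠ k` be an eigenvalue of a distance-regular graph `Γ` of diameter `D ≥ 2`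
with standard sequence `(u_i)` and let `F = ∑_{i=0}^D u_i A_i`. Then `θ` is of classical
`q`-type iff the `q`-distance matrix lies in the span of the all-ones matrix `J` and `F`. -/
theorem stmt5 {V : Type*} [Fintype V] (G : SimpleGraph V) [DecidableRel G.Adj]
    (D : ℕ) (p : ℕ → ℕ → ℕ → ℕ) (hdrg : IsDRG G D p) (hD : 2 ≤ D)
    (q : ℝ) (hq : q ≠ 0)
    (θ : ℝ) (hθ : IsAdjEigenval G θ) (hθk : θ ≠ (p 0 1 1 : ℝ))
    (u : ℕ → ℝ) (hu : IsStdSeq D p θ u) :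
    IsClassicalQType D q u ↔
      qDistMatrix G q ∈ Submodule.span ℝ
        ({Matrix.of fun _ _ => (1 : ℝ),
          ∑ i ∈ Finset.range (D + 1), u i • distMatrix G i} : Set (Matrix V V ℝ)) := by
  have := hdrg.connected.nonempty
  rw [isClassicalQType_iff, sum_smul_distMatrix hdrg.dist_le, ← hdrg.diam_eq]
  exact stmt5_general hdrg.ediam_ne_top (1 / q) (hu.apply_one_ne_apply_zero hθk)
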